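/- Let A and B be tuples of complex numbers all of whose entries have real part of absolute value less than 1/16, with distinguished entries α̂ of A and β̂ of B; write A′ = A minus α̂ and B′ = B minus β̂. Let s be a complex number with |ℜs| < 1/16. Set C := A′ ∪ {−β̂−s} and D := B′_s ∪ {−α̂}, where B′_s is B′ with s added to every entry. Then for every prime p, ∏_{α∈A′, β∈B′}(1 − p^{−1−α−β−s}) · Σ_{d≥0} Σ_{q=0}^{1} (−1)^q G_A(1−α̂, p^{d+q}) G_B(1−β̂, p^{d+q}) p^{−d−ds − q(2−α̂−β̂)} = ∏_{c∈C, d′∈D}(1 − p^{−1−c−d′}) · ∫₀¹ ∏_{c∈C}(1 − e(−θ) p^{−1/2−c})^{−1} ∏_{d′∈D}(1 − e(θ) p^{−1/2−d′})^{−1} dθ, where e(θ) := e^{2πiθ}. -/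

import Mathlib

open Complex

/-- Shifted divisor function: `tauSh A n = ∑_{n₁⋯n_k = n} n₁^{-α₁}⋯n_k^{-α_k}`,
defined by iterated Dirichlet convolution. -/
noncomputable def tauSh : List ℂ → ℕ → ℂ
  | [], n => if n = 1 then 1 else 0
  | a :: A, n => ∑ d ∈ n.divisors, (d : ℂ) ^ (-a) * tauSh A (n / d)

/-- `g_A(s,q) = ∏_{p ∣ q} ( ∏_{α∈A} (1 − p^{−s−α}) · ∑_{j≥0} τ_A(p^{j+q_p}) p^{−js} )`. -/
noncomputable def gSh (A : List ℂ) (s : ℂ) (q : ℕ) : ℂ :=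
  ∏ p ∈ q.primeFactors,
    ((A.map (fun α => 1 - (p : ℂ) ^ (-s - α))).prod *
      ∑' j : ℕ, tauSh A (p ^ (j + q.factorization p)) * (p : ℂ) ^ (-(j : ℂ) * s))

/-- `G_A(s,q) = ∑_{d∣q} (μ(d)/φ(d)) d^s ∑_{e∣d} (μ(e)/e^s) g_A(s, qe/d)`. -/
noncomputable def GSh (A : List ℂ) (s : ℂ) (q : ℕ) : ℂ :=
  ∑ d ∈ q.divisors, ((ArithmeticFunction.moebius d : ℂ) / (Nat.totient d : ℂ)) * (d : ℂ) ^ s *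
    ∑ e ∈ d.divisors, (ArithmeticFunction.moebius e : ℂ) / (e : ℂ) ^ s * gSh A s (q * e / d)


/-- generating series of complete homogeneous polynomials -/
noncomputable def gsH (A : List ℂ) : PowerSeries ℂ :=
  (A.map (fun a => PowerSeries.mk (fun n => a ^ n))).prod

noncomputable def hh (A : List ℂ) (n : ℕ) : ℂ := PowerSeries.coeff n (gsH A)

lemma hh_perm {A B : List ℂ} (h : A.Perm B) : hh A = hh B := by
  funext n
  unfold hh gsH
  rw [(h.map _).prod_eq]

lemma hh_nil (n : ℕ) : hh [] n = if n = 0 then 1 else 0 := by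
  simp [hh, gsH, PowerSeries.coeff_one]

lemma hh_cons (a : ℂ) (A : List ℂ) (n : ℕ) :
    hh (a :: A) n = ∑ x ∈ Finset.HasAntidiagonal.antidiagonal n, a ^ x.1 * hh A x.2 := by
  simp [hh, gsH, PowerSeries.coeff_mul]

lemma hh_zero (A : List ℂ) : hh A 0 = 1 := by
  induction A with
  | nil => simp [hh_nil]
  | cons a A ih => simp [hh_cons, ih]

lemma hh_succ (a : ℂ) (A : List ℂ) (n : ℕ) :
    hh (a :: A) (n + 1) = a * hh (a :: A) n + hh A (n + 1) := by
  rw [hh_cons, hh_cons, Finset.Nat.sum_antidiagonal_succ, Finset.mul_sum, add_comm]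
  congr 1
  · apply Finset.sum_congr rfl
    intro x _
    simp only; ring
  · simp

lemma hh_scale (t : ℂ) (A : List ℂ) (n : ℕ) :
    hh (A.map (fun a => t * a)) n = t ^ n * hh A n := by
  induction A generalizing n with
  | nil => by_cases h : n = 0 <;> simp [hh_nil, h]
  | cons a A ih =>
    rw [List.map_cons, hh_cons, hh_cons, Finset.mul_sum]
    apply Finset.sum_congr rfl
    intro x hx
    rw [← Finset.HasAntidiagonal.mem_antidiagonal.mp hx, ih, mul_pow, pow_add]; ring

lemma hh_sum (A : List ℂ) (z : ℂ) (h : ∀ a ∈ A, ‖a * z‖ < 1) :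
    (Summable fun n => ‖hh A n * z ^ n‖) ∧
      ∑' n, hh A n * z ^ n = (A.map (fun a => (1 - a * z)⁻¹)).prod := by
  induction A with
  | nil =>
    have hz : ∀ n ∉ ({0} : Finset ℕ), hh [] n * z ^ n = 0 := by
      intro n hn
      have : n ≠ 0 := by simpa using hn
      simp [hh_nil, this]
    constructor
    · apply summable_of_ne_finset_zero (s := {0})
      intro n hn; rw [hz n hn]; simp
    · rw [tsum_eq_sum hz]; simp [hh_nil]
  | cons a A ih =>
    obtain ⟨h1, h2⟩ := ih (fun b hb => h b (List.mem_cons_of_mem _ hb))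
    have ha := h a List.mem_cons_self
    have hg : Summable fun n : ℕ => ‖(a * z) ^ n‖ := by
      simp only [norm_pow]
      exact summable_geometric_of_lt_one (norm_nonneg _) ha
    have key : ∀ n, hh (a :: A) n * z ^ n =
        ∑ x ∈ Finset.HasAntidiagonal.antidiagonal n, (a * z) ^ x.1 * (hh A x.2 * z ^ x.2) := by
      intro n
      rw [hh_cons, Finset.sum_mul]
      apply Finset.sum_congr rfl
      intro x hx
      rw [← Finset.HasAntidiagonal.mem_antidiagonal.mp hx, mul_pow, pow_add]; ring
    simp only [key]
    refine ⟨summable_norm_sum_mul_antidiagonal_of_summable_norm (f := fun n => (a * z) ^ n)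
      (g := fun n => hh A n * z ^ n) hg h1, ?_⟩
    rw [← tsum_mul_tsum_eq_tsum_sum_antidiagonal_of_summable_norm
      (f := fun n => (a * z) ^ n) (g := fun n => hh A n * z ^ n) hg h1, h2,
      tsum_geometric_of_norm_lt_one ha]
    simp

lemma hh_bound (A : List ℂ) (r : ℝ) (hr : 0 < r) (h : ∀ a ∈ A, ‖a‖ < r) :
    ∃ K : ℝ, ∀ n, ‖hh A n‖ ≤ K * r ^ n := by
  obtain ⟨h1, -⟩ := hh_sum A ((r : ℂ)⁻¹) (by
    intro a ha
    rw [norm_mul, norm_inv, Complex.norm_real, Real.norm_of_nonneg hr.le, ← div_eq_mul_inv,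
      div_lt_one hr]
    exact h a ha)
  refine ⟨∑' n, ‖hh A n * (r : ℂ)⁻¹ ^ n‖, fun n => ?_⟩
  have := h1.le_tsum n (fun _ _ => norm_nonneg _)
  rw [norm_mul, norm_pow, norm_inv, Complex.norm_real, Real.norm_of_nonneg hr.le] at this
  calc ‖hh A n‖ = ‖hh A n‖ * r⁻¹ ^ n * r ^ n := by
        rw [mul_assoc, ← mul_pow, inv_mul_cancel₀ hr.ne']; simp
    _ ≤ _ := by gcongr

lemma double_sum (f a e : ℕ → ℂ) (u : ℂ) (K₁ K₂ s r : ℝ) (hs : 0 ≤ s) (hr : 0 ≤ r)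
    (hf : ∀ n, ‖f n‖ ≤ K₁ * s ^ n) (ha : ∀ n, ‖a n‖ ≤ K₂ * r ^ n)
    (hsr : s * r < 1) (hru : r * ‖u‖ < 1)
    (he : ∀ k, e k = ∑ x ∈ Finset.HasAntidiagonal.antidiagonal k, f x.1 * u ^ x.2) :
    ∃ T, HasSum (fun k => a k * e k) T ∧ HasSum (fun n => f n * ∑' j, a (j + n) * u ^ j) T := by
  have hsum : Summable (fun x : ℕ × ℕ => f x.1 * (a (x.2 + x.1) * u ^ x.2)) := by
    have h1 : Summable (fun n : ℕ => (s * r) ^ n) :=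
      summable_geometric_of_lt_one (by positivity) hsr
    have h2 : Summable (fun n : ℕ => (r * ‖u‖) ^ n) :=
      summable_geometric_of_lt_one (by positivity) hru
    have h3 := (h1.mul_of_nonneg h2 (fun _ => by positivity) (fun _ => by positivity)).mul_left
      (K₁ * K₂)
    refine Summable.of_norm_bounded h3 ?_
    rintro ⟨n, j⟩
    simp only [norm_mul, norm_pow]
    have hK : 0 ≤ K₁ * s ^ n := (norm_nonneg _).trans (hf n)
    calc ‖f n‖ * (‖a (j + n)‖ * ‖u‖ ^ j) ≤ (K₁ * s ^ n) * ((K₂ * r ^ (j + n)) * ‖u‖ ^ j) := by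
          gcongr
          · exact hf n
          · exact ha _
      _ = _ := by rw [mul_pow, mul_pow, pow_add]; ring
  refine ⟨∑' x : ℕ × ℕ, f x.1 * (a (x.2 + x.1) * u ^ x.2), ?_, ?_⟩
  · have h := hsum.hasSum
    rw [← (Finset.HasAntidiagonal.sigmaAntidiagonalEquivProd (A := ℕ)).hasSum_iff] at h
    have h' := h.sigma (g := fun k => a k * e k) (by
      intro k
      have := hasSum_fintype (fun c : Finset.HasAntidiagonal.antidiagonal k =>
        ((fun x : ℕ × ℕ => f x.1 * (a (x.2 + x.1) * u ^ x.2)) ∘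
          (Finset.HasAntidiagonal.sigmaAntidiagonalEquivProd (A := ℕ))) ⟨k, c⟩)
      convert this using 1
      rw [he, Finset.mul_sum, ← Finset.sum_coe_sort (Finset.HasAntidiagonal.antidiagonal k)]
      apply Finset.sum_congr rfl
      rintro ⟨x, hx⟩ _
      have := Finset.HasAntidiagonal.mem_antidiagonal.mp hx
      simp only [Function.comp, Finset.HasAntidiagonal.sigmaAntidiagonalEquivProd_apply]
      rw [add_comm x.2, this]; ring)
    exact h'
  · have h := hsum.hasSum.prod_fiberwise (g := fun n => f n * ∑' j, a (j + n) * u ^ j) (by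
      intro n
      have := (hsum.prod_factor n).hasSum
      simp only [tsum_mul_left] at this
      exact this)
    exact h

lemma conv_rec (f e : ℕ → ℂ) (u : ℂ) (h0 : e 0 = f 0) (h1 : ∀ k, e (k+1) = u * e k + f (k+1)) :
    ∀ k, e k = ∑ x ∈ Finset.HasAntidiagonal.antidiagonal k, f x.1 * u ^ x.2 := by
  intro k
  induction k with
  | zero => simp [h0]
  | succ k ih =>
    rw [h1, Finset.Nat.sum_antidiagonal_succ', ih, Finset.mul_sum, add_comm]
    congr 1
    · simp
    · apply Finset.sum_congr rfl
      intro x _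
      simp only; ring

lemma core_identity (a b c e : ℕ → ℂ) (u v w X : ℂ) (K₁ K₂ r : ℝ) (hr : 0 < r)
    (hwX : w * X = v)
    (ha : ∀ n, ‖a n‖ ≤ K₁ * r ^ n) (hb : ∀ n, ‖b n‖ ≤ K₂ * r ^ n)
    (hX : r * r * ‖X‖ < 1) (hu : r * ‖u‖ < 1) (hv : r * ‖v‖ < 1)
    (hc0 : c 0 = a 0) (hc : ∀ k, c (k+1) = w * c k + a (k+1))
    (he0 : e 0 = b 0) (he : ∀ k, e (k+1) = u * e k + b (k+1) * X ^ (k+1))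
    (hce : Summable fun k => c k * e k) :
    ∑' d : ℕ, X ^ d * ((∑' j, a (j + d) * u ^ j) * (∑' j, b (j + d) * v ^ j)
      - u * v * ((∑' j, a (j + (d+1)) * u ^ j) * (∑' j, b (j + (d+1)) * v ^ j)))
      = (1 - u * w) * ∑' k, c k * e k := by
  have hbX : ∀ n, ‖b n * X ^ n‖ ≤ K₂ * (r * ‖X‖) ^ n := by
    intro n
    rw [norm_mul, norm_pow, mul_pow, ← mul_assoc]
    gcongr
    exact hb n
  have hX' : r * ‖X‖ * r < 1 := by linarith [mul_right_comm r r ‖X‖]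
  obtain ⟨T₁, h11, h12⟩ := double_sum (fun n => b n * X ^ n) a e u K₂ K₁ (r * ‖X‖) r
    (by positivity) hr.le hbX ha hX' hu
    (conv_rec (fun n => b n * X ^ n) e u (by simpa using he0) he)
  obtain ⟨T₂, h21, h22⟩ := double_sum a (fun n => b n * X ^ n) c w K₁ K₂ r (r * ‖X‖)
    hr.le (by positivity) ha hbX (by linarith [mul_comm (r * ‖X‖) r])
    (by rw [mul_assoc, ← norm_mul, mul_comm X, hwX]; exact hv) (conv_rec _ _ _ hc0 hc)
  have h22' : HasSum (fun n => X ^ n * (a n * ∑' j, b (j + n) * v ^ j)) T₂ := by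
    convert h22 using 2 with n
    rw [mul_left_comm, ← tsum_mul_left]
    congr 2
    funext j
    rw [← hwX, mul_pow, pow_add]; ring
  have hab : Summable (fun n => a n * (b n * X ^ n)) := by
    have h1 : Summable (fun n : ℕ => (r * ‖X‖ * r) ^ n) :=
      summable_geometric_of_lt_one (by positivity) hX'
    refine Summable.of_norm_bounded (h1.mul_left (K₁ * K₂)) fun n => ?_
    rw [norm_mul]
    have : 0 ≤ K₁ * r ^ n := (norm_nonneg _).trans (ha n)
    calc _ ≤ (K₁ * r ^ n) * (K₂ * (r * ‖X‖) ^ n) := by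
          gcongr
          · exact ha n
          · exact hbX n
      _ = _ := by rw [mul_pow _ r]; ring
  have hL := ((h12.add h22').sub hab.hasSum).tsum_eq
  have hR := ((h11.add h21).sub hab.hasSum).tsum_eq
  have hsR := ((h11.add h21).sub hab.hasSum).summable
  have hrec : ∀ (y : ℕ → ℂ) (z : ℂ) (ρ : ℝ) (K : ℝ), 0 < ρ → (∀ n, ‖y n‖ ≤ K * ρ ^ n) →
      ρ * ‖z‖ < 1 → ∀ d, ∑' j, y (j + d) * z ^ j = y d + z * ∑' j, y (j + (d+1)) * z ^ j := by
    intro y z ρ K hρ hy hz d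
    have hs : Summable (fun j => y (j + d) * z ^ j) := by
      refine Summable.of_norm_bounded ((summable_geometric_of_lt_one (by positivity) hz).mul_left
        (K * ρ ^ d)) fun n => ?_
      rw [norm_mul, norm_pow]
      calc _ ≤ (K * ρ ^ (n + d)) * ‖z‖ ^ n := by
            gcongr
            exact hy _
        _ = _ := by rw [mul_pow, pow_add]; ring
    rw [hs.tsum_eq_zero_add, ← tsum_mul_left]
    congr 1
    · simp
    · congr 1; funext j
      rw [show j + 1 + d = j + (d+1) by ring, pow_succ]; ring
  have hU := hrec a u r K₁ hr ha hu
  have hV := hrec b v r K₂ hr hb hv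
  calc _ = T₁ + T₂ - ∑' n, a n * (b n * X ^ n) := by
        rw [← hL]
        congr 1; funext d
        rw [hU d, hV d]; ring
    _ = _ := by
        rw [← hR, hsR.tsum_eq_zero_add, sub_mul, one_mul, hce.tsum_eq_zero_add]
        nth_rewrite 2 [← hce.tsum_eq_zero_add]
        have hce' := (summable_nat_add_iff 1).mpr hce
        rw [← tsum_mul_left, add_sub_assoc (c 0 * e 0), ← hce'.tsum_sub (hce.mul_left _)]
        congr 1
        · rw [hc0, he0]; ring
        · congr 1; funext k
          rw [hc, he]; ring

lemma integral_exp_int (n : ℤ) :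
    ∫ θ in (0:ℝ)..1, Complex.exp (2 * Real.pi * Complex.I * n * θ) = if n = 0 then 1 else 0 := by
  split_ifs with h
  · simp [h]
  · have hc : (2 * Real.pi * Complex.I * n : ℂ) ≠ 0 := by
      have := Real.pi_ne_zero
      simp [h, this]
    rw [integral_exp_mul_complex hc]
    have : Complex.exp (2 * Real.pi * Complex.I * n * (1:ℝ)) = 1 := by
      rw [Complex.exp_eq_one_iff]
      exact ⟨n, by push_cast; ring⟩
    rw [this]; simp

lemma integral_parseval (A B : List ℂ) (hA : ∀ a ∈ A, ‖a‖ < 1) (hB : ∀ b ∈ B, ‖b‖ < 1) :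
    (Summable fun k => hh A k * hh B k) ∧
    ∫ θ in (0:ℝ)..1,
      (A.map (fun a => (1 - Complex.exp (-(2 * Real.pi * Complex.I * θ)) * a)⁻¹)).prod *
      (B.map (fun b => (1 - Complex.exp (2 * Real.pi * Complex.I * θ) * b)⁻¹)).prod
      = ∑' k, hh A k * hh B k := by
  have hn1 : ∀ θ : ℝ, ‖Complex.exp (-(2 * Real.pi * Complex.I * θ))‖ = 1 := by
    intro θ
    rw [Complex.norm_exp]; simp
  have hn2 : ∀ θ : ℝ, ‖Complex.exp (2 * Real.pi * Complex.I * θ)‖ = 1 := by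
    intro θ
    rw [Complex.norm_exp]; simp
  have hsA : Summable fun n => ‖hh A n‖ := by
    have := (hh_sum A 1 (by simpa using hA)).1
    simpa using this
  have hsB : Summable fun n => ‖hh B n‖ := by
    have := (hh_sum B 1 (by simpa using hB)).1
    simpa using this
  have hsAB : Summable fun x : ℕ × ℕ => ‖hh A x.1‖ * ‖hh B x.2‖ :=
    hsA.mul_of_nonneg hsB (fun _ => norm_nonneg _) (fun _ => norm_nonneg _)
  let F : ℕ × ℕ → C(ℝ, ℂ) := fun x =>
    ⟨fun θ => hh A x.1 * hh B x.2 *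
      Complex.exp (2 * Real.pi * Complex.I * ((x.2 : ℤ) - (x.1 : ℤ) : ℤ) * θ), by fun_prop⟩
  have hFn : ∀ x θ, ‖F x θ‖ = ‖hh A x.1‖ * ‖hh B x.2‖ := by
    intro x θ
    simp only [F, ContinuousMap.coe_mk, norm_mul]
    rw [Complex.norm_exp]
    have : (2 * Real.pi * Complex.I * ((x.2 : ℤ) - (x.1 : ℤ) : ℤ) * θ : ℂ).re = 0 := by
      simp
    rw [this]; simp
  have hF := intervalIntegral.hasSum_intervalIntegral_of_summable_norm (a := 0) (b := 1) (f := F) (by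
    refine Summable.of_nonneg_of_le (fun _ => norm_nonneg _) (fun x => ?_) hsAB
    rw [ContinuousMap.norm_le _ (by positivity)]
    intro θ
    simpa using (hFn x θ).le)
  have hI : ∀ x : ℕ × ℕ, ∫ θ in (0:ℝ)..1, F x θ = if x.1 = x.2 then hh A x.1 * hh B x.2 else 0 := by
    intro x
    simp only [F, ContinuousMap.coe_mk]
    rw [intervalIntegral.integral_const_mul, integral_exp_int]
    by_cases h : x.1 = x.2
    · simp [h]
    · have : ((x.2 : ℤ) - (x.1 : ℤ)) ≠ 0 := by omega
      rw [if_neg this, if_neg h, mul_zero]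
  simp only [hI] at hF
  have hprod : ∀ θ : ℝ, ∑' x, F x θ =
      (A.map (fun a => (1 - Complex.exp (-(2 * Real.pi * Complex.I * θ)) * a)⁻¹)).prod *
      (B.map (fun b => (1 - Complex.exp (2 * Real.pi * Complex.I * θ) * b)⁻¹)).prod := by
    intro θ
    obtain ⟨a1, a2⟩ := hh_sum A (Complex.exp (-(2 * Real.pi * Complex.I * θ))) (by
      intro a ha; rw [norm_mul, hn1, mul_one]; exact hA a ha)
    obtain ⟨b1, b2⟩ := hh_sum B (Complex.exp (2 * Real.pi * Complex.I * θ)) (by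
      intro a ha; rw [norm_mul, hn2, mul_one]; exact hB a ha)
    simp only [mul_comm (Complex.exp _)]
    rw [← a2, ← b2, tsum_mul_tsum_of_summable_norm a1 b1]
    congr 1; funext x
    simp only [F, ContinuousMap.coe_mk]
    rw [← Complex.exp_nat_mul, ← Complex.exp_nat_mul, mul_mul_mul_comm, ← Complex.exp_add]
    congr 2
    push_cast; ring
  simp only [hprod] at hF
  have hinj : Function.Injective (fun k : ℕ => (k, k)) := fun a b h => (Prod.mk.inj h).1
  have hF2 := (hinj.hasSum_iff (f := fun x : ℕ × ℕ =>
    if x.1 = x.2 then hh A x.1 * hh B x.2 else 0) (by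
      rintro ⟨i, j⟩ hx
      have : i ≠ j := by
        rintro rfl
        exact hx ⟨i, rfl⟩
      simp [this])).mpr hF
  have hF3 := hF2
  simp only [Function.comp_def, if_true] at hF3
  exact ⟨hF3.summable, hF3.tsum_eq.symm⟩

lemma natpow_cpow (p k : ℕ) (z : ℂ) : ((p ^ k : ℕ) : ℂ) ^ z = ((p : ℂ) ^ z) ^ k := by
  push_cast
  rw [← Complex.natCast_cpow_natCast_mul, Complex.cpow_nat_mul]

lemma tauSh_prime_pow (A : List ℂ) (p : ℕ) (hp : p.Prime) (n : ℕ) :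
    tauSh A (p ^ n) = hh (A.map (fun α => (p : ℂ) ^ (-α))) n := by
  induction A generalizing n with
  | nil =>
    rw [List.map_nil, hh_nil]
    simp only [tauSh]
    have : p ^ n = 1 ↔ n = 0 := by
      constructor
      · intro h
        by_contra hn
        exact absurd h (Nat.one_lt_pow hn hp.one_lt).ne'
      · rintro rfl; simp
    simp only [this]
  | cons a A ih =>
    simp only [tauSh, List.map_cons]
    rw [hh_cons, Nat.sum_divisors_prime_pow hp, Finset.Nat.sum_antidiagonal_eq_sum_range_succ_mk]
    apply Finset.sum_congr rfl
    intro k hk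
    have hk' : k ≤ n := by have := Finset.mem_range.mp hk; omega
    rw [Nat.pow_div hk' hp.pos, ih, natpow_cpow]

lemma list_prod_inv_aux (A : List ℂ) (u : ℂ) (h : ∀ a ∈ A, ‖a * u‖ < 1) :
    (A.map (fun a => 1 - a * u)).prod * (A.map (fun a => (1 - a * u)⁻¹)).prod = 1 := by
  induction A with
  | nil => simp
  | cons a A ih =>
    have ih := ih (fun b hb => h b (List.mem_cons_of_mem _ hb))
    have ha := h a List.mem_cons_self
    have hne : 1 - a * u ≠ 0 := by
      intro h0
      have : a * u = 1 := (sub_eq_zero.mp h0).symm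
      rw [this] at ha; simp at ha
    simp only [List.map_cons, List.prod_cons]
    rw [mul_mul_mul_comm, ih, mul_inv_cancel₀ hne, one_mul]

lemma gSh_prime_pow (A : List ℂ) (s : ℂ) (p : ℕ) (hp : p.Prime)
    (h : ∀ a ∈ A.map (fun α => (p : ℂ) ^ (-α)), ‖a * (p : ℂ) ^ (-s)‖ < 1) (d : ℕ) :
    gSh A s (p ^ d) = ((A.map (fun α => (p : ℂ) ^ (-α))).map (fun a => 1 - a * (p : ℂ) ^ (-s))).prod
      * ∑' j, hh (A.map (fun α => (p : ℂ) ^ (-α))) (j + d) * ((p : ℂ) ^ (-s)) ^ j := by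
  have hp0 : (p : ℂ) ≠ 0 := by exact_mod_cast hp.ne_zero
  rcases Nat.eq_zero_or_pos d with rfl | hd
  · have := (hh_sum _ _ h).2
    simp only [add_zero]
    rw [this, list_prod_inv_aux _ _ h]
    simp [gSh]
  · unfold gSh
    rw [Nat.primeFactors_prime_pow hd.ne' hp, Finset.prod_singleton, List.map_map]
    congr 1
    · congr 1
      apply List.map_congr_left
      intro α _
      simp only [Function.comp]
      rw [← Complex.cpow_add _ _ hp0]
      congr 2; ring
    · congr 1; funext j
      rw [hp.factorization_pow, tauSh_prime_pow _ _ hp]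
      simp only [Finsupp.single_eq_same]
      congr 1
      rw [← Complex.cpow_nat_mul]
      congr 1; ring

lemma GSh_prime_pow_succ (A : List ℂ) (s : ℂ) (p : ℕ) (hp : p.Prime) (d : ℕ) :
    GSh A s (p ^ (d+1)) = gSh A s (p ^ (d+1)) - (p : ℂ) ^ s / ((p : ℂ) - 1) *
      (gSh A s (p ^ d) - gSh A s (p ^ (d + 1)) / (p : ℂ) ^ s) := by
  unfold GSh
  rw [Nat.sum_divisors_prime_pow hp, Finset.sum_range_succ', Finset.sum_range_succ']
  have hz : ∀ k ∈ Finset.range d, ((ArithmeticFunction.moebius (p ^ (k + 1 + 1)) : ℤ) : ℂ) = 0 := by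
    intro k _
    rw [ArithmeticFunction.moebius_apply_prime_pow hp (by omega)]
    simp
  rw [Finset.sum_eq_zero (fun k hk => by rw [hz k hk]; simp)]
  have h1 : p ^ (d + 1) * p / p = p ^ (d+1) := Nat.mul_div_cancel _ hp.pos
  have h2 : p ^ (d + 1) / p = p ^ d := by rw [pow_succ]; exact Nat.mul_div_cancel _ hp.pos
  have h3 : ((p - 1 : ℕ) : ℂ) = (p : ℂ) - 1 := by
    rw [Nat.cast_sub hp.one_lt.le]; simp
  simp only [zero_add, pow_one, pow_zero]
  rw [hp.sum_divisors]
  simp only [ArithmeticFunction.moebius_apply_prime hp, Nat.totient_prime hp, Nat.divisors_one,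
    Finset.sum_singleton, ArithmeticFunction.moebius_apply_one, Nat.totient_one, mul_one, Nat.div_one,
    h1, h2, h3, Nat.cast_one, Complex.one_cpow]
  push_cast
  ring

lemma tail_rec (y : ℕ → ℂ) (z : ℂ) (hs : Summable fun n => ‖y n * z ^ n‖) (hz : z ≠ 0) (d : ℕ) :
    Summable (fun j => y (j + d) * z ^ j) ∧
    ∑' j, y (j + d) * z ^ j = y d + z * ∑' j, y (j + (d+1)) * z ^ j := by
  have hs : Summable (fun j => y (j + d) * z ^ j) := by
    have h1 := ((summable_nat_add_iff d).mpr hs.of_norm).mul_left ((z ^ d)⁻¹)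
    refine h1.congr fun j => ?_
    rw [pow_add]; field_simp
  refine ⟨hs, ?_⟩
  rw [hs.tsum_eq_zero_add, ← tsum_mul_left]
  congr 1
  · simp
  · congr 1; funext j
    rw [show j + 1 + d = j + (d+1) by ring, pow_succ]; ring

lemma GSh_eq (L₁ L₂ : List ℂ) (αh : ℂ) (p : ℕ) (hp : p.Prime)
    (h : ∀ α ∈ L₁ ++ αh :: L₂, ‖(p : ℂ) ^ (-α) * (p : ℂ) ^ (-(1 - αh))‖ < 1) (d : ℕ) :
    GSh (L₁ ++ αh :: L₂) (1 - αh) (p ^ d) =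
      (((L₁ ++ L₂).map (fun α => (p : ℂ) ^ (-α))).map
        (fun a => 1 - a * (p : ℂ) ^ (-(1 - αh)))).prod *
      ∑' j, hh ((L₁ ++ L₂).map (fun α => (p : ℂ) ^ (-α))) (j + d) * ((p : ℂ) ^ (-(1 - αh))) ^ j := by
  have hp0 : (p : ℂ) ≠ 0 := by exact_mod_cast hp.ne_zero
  have hp1 : (p : ℂ) - 1 ≠ 0 := by
    rw [sub_ne_zero]; exact_mod_cast hp.one_lt.ne'
  have hperm : (L₁ ++ αh :: L₂).Perm (αh :: (L₁ ++ L₂)) := List.perm_middle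
  have hg := gSh_prime_pow (L₁ ++ αh :: L₂) (1 - αh) p hp (by
    intro a ha
    obtain ⟨α, hα, rfl⟩ := List.mem_map.mp ha
    exact h α hα)
  have hA' : ∀ a ∈ (L₁ ++ L₂).map (fun α => (p : ℂ) ^ (-α)), ‖a * (p : ℂ) ^ (-(1 - αh))‖ < 1 := by
    intro a ha
    obtain ⟨α, hα, rfl⟩ := List.mem_map.mp ha
    exact h α (hperm.mem_iff.mpr (List.mem_cons_of_mem _ hα))
  have hA : ∀ a ∈ (αh :: (L₁ ++ L₂)).map (fun α => (p : ℂ) ^ (-α)),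
      ‖a * (p : ℂ) ^ (-(1 - αh))‖ < 1 := by
    intro a ha
    obtain ⟨α, hα, rfl⟩ := List.mem_map.mp ha
    exact h α (hperm.mem_iff.mpr hα)
  have hs' := (hh_sum _ _ hA').1
  have hs := (hh_sum _ _ hA).1
  rw [hh_perm (hperm.map _), ((hperm.map _).map _).prod_eq] at hg
  rw [List.map_cons] at hg hs
  have hau : (p : ℂ) ^ (-αh) * (p : ℂ) ^ (-(1 - αh)) * p = 1 := by
    nth_rewrite 3 [← Complex.cpow_one (p : ℂ)]
    rw [← Complex.cpow_add _ _ hp0, ← Complex.cpow_add _ _ hp0]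
    rw [show -αh + -(1 - αh) + 1 = 0 by ring, Complex.cpow_zero]
  have hu0 : (p : ℂ) ^ (-(1 - αh)) ≠ 0 := by simp [Complex.cpow_eq_zero_iff, hp0]
  have hus : (p : ℂ) ^ (1 - αh) = ((p : ℂ) ^ (-(1 - αh)))⁻¹ := by
    rw [Complex.cpow_neg, inv_inv]
  rcases d with _ | d
  · have h2 := (hh_sum _ _ hA').2
    simp only [add_zero]
    rw [h2, list_prod_inv_aux _ _ hA']
    simp [GSh, gSh]
  rw [GSh_prime_pow_succ _ _ _ hp, hg, hg, hus]
  simp only [List.map_cons, List.prod_cons]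
  set a' := (L₁ ++ L₂).map (fun α => (p : ℂ) ^ (-α))
  set u := (p : ℂ) ^ (-(1 - αh))
  set x := (p : ℂ) ^ (-αh)
  set P := (a'.map (fun a => 1 - a * u)).prod
  have r1 := (tail_rec _ _ hs hu0 d).2
  have r2 := (tail_rec _ _ hs hu0 (d+1)).2
  have key : ∑' j, hh a' (j + (d+1)) * u ^ j =
      ∑' j, hh (x :: a') (j + (d+1)) * u ^ j - x * ∑' j, hh (x :: a') (j + d) * u ^ j := by
    rw [← tsum_mul_left, ← (tail_rec _ _ hs hu0 (d+1)).1.tsum_sub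
      ((tail_rec _ _ hs hu0 d).1.mul_left _)]
    congr 1; funext j
    rw [← add_assoc, hh_succ]; ring
  rw [key]
  set T := ∑' j, hh (x :: a') (j + (d+1)) * u ^ j
  set S := ∑' j, hh (x :: a') (j + d) * u ^ j
  have hx : x = (u * p)⁻¹ := by
    field_simp
    linear_combination hau
  rw [hx]
  field_simp
  ring

lemma norm_cpow_lt {p : ℕ} (hp : p.Prime) {z w : ℂ} (h : z.re < w.re) :
    ‖(p : ℂ) ^ z‖ < ‖(p : ℂ) ^ w‖ := by
  rw [Complex.norm_natCast_cpow_of_pos hp.pos, Complex.norm_natCast_cpow_of_pos hp.pos]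
  exact Real.rpow_lt_rpow_of_exponent_lt (by exact_mod_cast hp.one_lt) h

lemma norm_cpow_lt_one {p : ℕ} (hp : p.Prime) {z : ℂ} (h : z.re < 0) :
    ‖(p : ℂ) ^ z‖ < 1 := by
  have := norm_cpow_lt hp (z := z) (w := 0) (by simpa using h)
  simpa using this

/-- Let A, B be tuples all of whose entries have |ℜ| < 1/16, with
distinguished entries α̂ ∈ A, β̂ ∈ B; A′ = A minus α̂, B′ = B minus β̂. Let |ℜs| < 1/16,
and set C := A′ ∪ {−β̂−s}, D := B′_s ∪ {−α̂}. Then for every prime p,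
∏_{α∈A′,β∈B′}(1−p^{−1−α−β−s}) Σ_{d≥0} Σ_{q=0}^{1} (−1)^q G_A(1−α̂,p^{d+q})
    G_B(1−β̂,p^{d+q}) p^{−d−ds−q(2−α̂−β̂)}
  = ∏_{c∈C,d′∈D}(1−p^{−1−c−d′}) ·
    ∫₀¹ ∏_{c∈C}(1−e(−θ)p^{−1/2−c})^{−1} ∏_{d′∈D}(1−e(θ)p^{−1/2−d′})^{−1} dθ. -/
theorem stmt18 (L₁ L₂ M₁ M₂ : List ℂ) (αh βh : ℂ)
    (hA : ∀ α ∈ L₁ ++ αh :: L₂, |α.re| < 1/16)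
    (hB : ∀ β ∈ M₁ ++ βh :: M₂, |β.re| < 1/16)
    (s : ℂ) (hs : |s.re| < 1/16) (p : ℕ) (hp : p.Prime) :
    ((L₁ ++ L₂).map (fun α =>
        ((M₁ ++ M₂).map (fun β => 1 - (p : ℂ) ^ (-1 - α - β - s))).prod)).prod *
      (∑' d : ℕ, ∑ q ∈ Finset.range 2,
        (-1 : ℂ) ^ q * GSh (L₁ ++ αh :: L₂) (1 - αh) (p ^ (d + q))
          * GSh (M₁ ++ βh :: M₂) (1 - βh) (p ^ (d + q))
          * (p : ℂ) ^ (-(d : ℂ) - (d : ℂ) * s - (q : ℂ) * (2 - αh - βh)))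
    = (((L₁ ++ L₂) ++ [-βh - s]).map (fun c =>
          ((((M₁ ++ M₂).map (fun β => β + s)) ++ [-αh]).map (fun d' =>
            1 - (p : ℂ) ^ (-1 - c - d'))).prod)).prod *
      ∫ θ in (0:ℝ)..1,
        (((L₁ ++ L₂) ++ [-βh - s]).map (fun c =>
          (1 - Complex.exp (-(2 * Real.pi * Complex.I * θ)) * (p : ℂ) ^ (-(1/2 : ℂ) - c))⁻¹)).prod *
        ((((M₁ ++ M₂).map (fun β => β + s)) ++ [-αh]).map (fun d' =>
          (1 - Complex.exp (2 * Real.pi * Complex.I * θ) * (p : ℂ) ^ (-(1/2 : ℂ) - d'))⁻¹)).prod := by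
  have hp0 : (p : ℂ) ≠ 0 := by exact_mod_cast hp.ne_zero
  have hpA : (L₁ ++ αh :: L₂).Perm (αh :: (L₁ ++ L₂)) := List.perm_middle
  have hpB : (M₁ ++ βh :: M₂).Perm (βh :: (M₁ ++ M₂)) := List.perm_middle
  have hα := abs_lt.mp (hA αh (by simp))
  have hβ := abs_lt.mp (hB βh (by simp))
  have hs' := abs_lt.mp hs
  have hA' : ∀ α ∈ L₁ ++ L₂, -(1/16) < α.re ∧ α.re < 1/16 := fun α h =>
    abs_lt.mp (hA α (hpA.mem_iff.mpr (List.mem_cons_of_mem _ h)))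
  have hB' : ∀ β ∈ M₁ ++ M₂, -(1/16) < β.re ∧ β.re < 1/16 := fun β h =>
    abs_lt.mp (hB β (hpB.mem_iff.mpr (List.mem_cons_of_mem _ h)))
  have hGA := GSh_eq L₁ L₂ αh p hp (by
    intro α h
    have := abs_lt.mp (hA α h)
    rw [← Complex.cpow_add _ _ hp0]
    apply norm_cpow_lt_one hp
    simp; linarith)
  have hGB := GSh_eq M₁ M₂ βh p hp (by
    intro α h
    have := abs_lt.mp (hB α h)
    rw [← Complex.cpow_add _ _ hp0]
    apply norm_cpow_lt_one hp
    simp; linarith)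
  generalize L₁ ++ αh :: L₂ = A at *
  generalize M₁ ++ βh :: M₂ = B at *
  generalize L₁ ++ L₂ = A' at *
  generalize M₁ ++ M₂ = B' at *
  have hr : 0 < ‖(p : ℂ) ^ (1/8 : ℂ)‖ := by
    rw [norm_pos_iff]; simp [Complex.cpow_eq_zero_iff, hp0]
  obtain ⟨K₁, hK₁⟩ := hh_bound (A'.map (fun α => (p : ℂ) ^ (-α))) _ hr (by
    intro a ha
    obtain ⟨α, hα, rfl⟩ := List.mem_map.mp ha
    have := hA' α hα
    apply norm_cpow_lt hp
    simp; linarith)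
  obtain ⟨K₂, hK₂⟩ := hh_bound (B'.map (fun α => (p : ℂ) ^ (-α))) _ hr (by
    intro a ha
    obtain ⟨α, hα, rfl⟩ := List.mem_map.mp ha
    have := hB' α hα
    apply norm_cpow_lt hp
    simp; linarith)
  obtain ⟨hce, hint⟩ := integral_parseval ((A' ++ [-βh - s]).map (fun c => (p : ℂ) ^ (-(1/2 : ℂ) - c)))
    (((B'.map (fun β => β + s)) ++ [-αh]).map (fun d' => (p : ℂ) ^ (-(1/2 : ℂ) - d'))) (by
      intro a ha
      obtain ⟨c, hc, rfl⟩ := List.mem_map.mp ha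
      apply norm_cpow_lt_one hp
      rcases List.mem_append.mp hc with h | h
      · have := hA' c h
        simp; linarith
      · rw [List.mem_singleton] at h
        subst h
        simp; linarith) (by
      intro a ha
      obtain ⟨c, hc, rfl⟩ := List.mem_map.mp ha
      apply norm_cpow_lt_one hp
      rcases List.mem_append.mp hc with h | h
      · obtain ⟨β, hβm, rfl⟩ := List.mem_map.mp h
        have := hB' β hβm
        simp; linarith
      · rw [List.mem_singleton] at h
        subst h
        simp; linarith)
  simp only [List.map_map (l := A' ++ _), List.map_map (l := List.map _ B' ++ _),
    Function.comp_def] at hint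
  rw [hint]
  clear hint
  set a := A'.map (fun α => (p : ℂ) ^ (-α)) with ha
  set b := B'.map (fun α => (p : ℂ) ^ (-α)) with hb
  have hterm : ∀ k, hh ((A' ++ [-βh - s]).map (fun c => (p : ℂ) ^ (-(1/2 : ℂ) - c))) k *
      hh (((B'.map (fun β => β + s)) ++ [-αh]).map (fun d' => (p : ℂ) ^ (-(1/2 : ℂ) - d'))) k =
      hh ((p : ℂ) ^ (βh + s) :: a) k *
      hh ((p : ℂ) ^ (-(1 - αh)) :: b.map (fun x => (p : ℂ) ^ (-1 - s) * x)) k := by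
    intro k
    have e1 : ((A' ++ [-βh - s]).map (fun c => (p : ℂ) ^ (-(1/2 : ℂ) - c))).Perm
        (((p : ℂ) ^ (βh + s) :: a).map (fun x => (p : ℂ) ^ (-(1/2 : ℂ)) * x)) := by
      refine (List.perm_append_singleton _ _).map _ |>.trans (List.Perm.of_eq ?_)
      rw [ha, List.map_cons, List.map_cons, List.map_map]
      congr 1
      · rw [← Complex.cpow_add _ _ hp0]; congr 1; ring
      · apply List.map_congr_left
        intro x _
        simp only [Function.comp]
        rw [← Complex.cpow_add _ _ hp0]; congr 1
    have e2 : (((B'.map (fun β => β + s)) ++ [-αh]).map (fun d' => (p : ℂ) ^ (-(1/2 : ℂ) - d'))).Perm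
        (((p : ℂ) ^ (-(1 - αh)) :: b.map (fun x => (p : ℂ) ^ (-1 - s) * x)).map
          (fun x => (p : ℂ) ^ (1/2 : ℂ) * x)) := by
      refine (List.perm_append_singleton _ _).map _ |>.trans (List.Perm.of_eq ?_)
      rw [hb, List.map_cons, List.map_cons, List.map_map, List.map_map, List.map_map]
      congr 1
      · rw [← Complex.cpow_add _ _ hp0]; congr 1; ring
      · apply List.map_congr_left
        intro x _
        simp only [Function.comp]
        rw [← Complex.cpow_add _ _ hp0, ← Complex.cpow_add _ _ hp0]; congr 1; ring
    rw [hh_perm e1, hh_perm e2, hh_scale, hh_scale, mul_mul_mul_comm, ← mul_pow,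
      ← Complex.cpow_add _ _ hp0, neg_add_cancel, Complex.cpow_zero, one_pow, one_mul]
  simp only [hterm] at hce ⊢
  have core := core_identity (hh a) (hh b) (hh ((p : ℂ) ^ (βh + s) :: a))
    (hh ((p : ℂ) ^ (-(1 - αh)) :: b.map (fun x => (p : ℂ) ^ (-1 - s) * x)))
    ((p : ℂ) ^ (-(1 - αh))) ((p : ℂ) ^ (-(1 - βh))) ((p : ℂ) ^ (βh + s)) ((p : ℂ) ^ (-1 - s))
    K₁ K₂ _ hr (by rw [← Complex.cpow_add _ _ hp0]; congr 1; ring) hK₁ hK₂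
    (by
      rw [← norm_mul, ← norm_mul, ← Complex.cpow_add _ _ hp0, ← Complex.cpow_add _ _ hp0]
      apply norm_cpow_lt_one hp
      simp; linarith)
    (by
      rw [← norm_mul, ← Complex.cpow_add _ _ hp0]
      apply norm_cpow_lt_one hp
      simp; linarith)
    (by
      rw [← norm_mul, ← Complex.cpow_add _ _ hp0]
      apply norm_cpow_lt_one hp
      simp; linarith)
    (by simp only [hh_zero]) (fun k => hh_succ _ _ _)
    (by simp only [hh_zero]) (fun k => by rw [hh_succ, hh_scale]; ring) hce
  have hL : ∀ d : ℕ, ∑ q ∈ Finset.range 2,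
        (-1 : ℂ) ^ q * GSh A (1 - αh) (p ^ (d + q)) * GSh B (1 - βh) (p ^ (d + q))
          * (p : ℂ) ^ (-(d : ℂ) - (d : ℂ) * s - (q : ℂ) * (2 - αh - βh)) =
      (a.map (fun x => 1 - x * (p : ℂ) ^ (-(1 - αh)))).prod *
      (b.map (fun x => 1 - x * (p : ℂ) ^ (-(1 - βh)))).prod *
      (((p : ℂ) ^ (-1 - s)) ^ d * ((∑' j, hh a (j + d) * ((p : ℂ) ^ (-(1 - αh))) ^ j) *
        (∑' j, hh b (j + d) * ((p : ℂ) ^ (-(1 - βh))) ^ j)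
      - (p : ℂ) ^ (-(1 - αh)) * (p : ℂ) ^ (-(1 - βh)) *
        ((∑' j, hh a (j + (d+1)) * ((p : ℂ) ^ (-(1 - αh))) ^ j) *
        (∑' j, hh b (j + (d+1)) * ((p : ℂ) ^ (-(1 - βh))) ^ j)))) := by
    intro d
    have x0 : (p : ℂ) ^ (-(d : ℂ) - (d : ℂ) * s - ((0 : ℕ) : ℂ) * (2 - αh - βh)) =
        ((p : ℂ) ^ (-1 - s)) ^ d := by
      rw [← Complex.cpow_nat_mul]; congr 1; push_cast; ring
    have x1 : (p : ℂ) ^ (-(d : ℂ) - (d : ℂ) * s - ((1 : ℕ) : ℂ) * (2 - αh - βh)) =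
        ((p : ℂ) ^ (-1 - s)) ^ d * ((p : ℂ) ^ (-(1 - αh)) * (p : ℂ) ^ (-(1 - βh))) := by
      rw [← Complex.cpow_nat_mul, ← Complex.cpow_add _ _ hp0, ← Complex.cpow_add _ _ hp0]
      congr 1; push_cast; ring
    rw [Finset.sum_range_succ, Finset.sum_range_one, x0, x1, hGA, hGB, hGA, hGB]
    simp only [add_zero]
    ring
  simp only [hL]
  rw [tsum_mul_left, core]
  have hP : ((A' ++ [-βh - s]).map (fun c =>
          (((B'.map (fun β => β + s)) ++ [-αh]).map (fun d' =>
            1 - (p : ℂ) ^ (-1 - c - d'))).prod)).prod =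
      (A'.map (fun α => (B'.map (fun β => 1 - (p : ℂ) ^ (-1 - α - β - s))).prod)).prod *
      (a.map (fun x => 1 - x * (p : ℂ) ^ (-(1 - αh)))).prod *
      (b.map (fun x => 1 - x * (p : ℂ) ^ (-(1 - βh)))).prod *
      (1 - (p : ℂ) ^ (-(1 - αh)) * (p : ℂ) ^ (βh + s)) := by
    have f1 : ∀ α : ℂ, (p : ℂ) ^ (-α) * (p : ℂ) ^ (-(1 - αh)) = (p : ℂ) ^ (-1 - α - -αh) := by
      intro α
      rw [← Complex.cpow_add _ _ hp0]; congr 1; ring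
    have f2 : ∀ β : ℂ, (p : ℂ) ^ (-β) * (p : ℂ) ^ (-(1 - βh)) =
        (p : ℂ) ^ (-1 - (-βh - s) - (β + s)) := by
      intro α
      rw [← Complex.cpow_add _ _ hp0]; congr 1; ring
    have f3 : (p : ℂ) ^ (-(1 - αh)) * (p : ℂ) ^ (βh + s) =
        (p : ℂ) ^ (-1 - (-βh - s) - (-αh)) := by
      rw [← Complex.cpow_add _ _ hp0]; congr 1; ring
    have f4 : ∀ α β : ℂ, -1 - α - β - s = -1 - α - (β + s) := by intros; ring
    simp only [ha, hb, List.map_append, List.prod_append, List.map_cons, List.map_nil,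
      List.prod_cons, List.prod_nil, mul_one, List.map_map, Function.comp_def, List.prod_map_mul,
      f1, f2, f3, f4]
    ring
  rw [hP]
  ring
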